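/- Let (η(x))_{x∈ℤ} be i.i.d. Bernoulli(λ) random variables with 0 < λ < 1/2, let ξ be the walk lift of η with ξ(0) = 0, and let W(x) := ξ(x) − min_{y≤x} ξ(y). Then the process W is reversible: (W(x))_{x∈ℤ} has the same law as the time reversal (W(−x))_{x∈ℤ}. -/

import Mathlib

open MeasureTheory Filter Finset

/-- A ball configuration: a box at each integer, occupied (`true`) or empty (`false`). -/
abbrev Cfg := ℤ → Bool

/-- Numerical (integer) value of a box. -/
def valZ (b : Bool) : ℤ := if b then 1 else 0

/-- Numerical (real) value of a box. -/
def valR (b : Bool) : ℝ := if b then 1 else 0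

/-- `x` is a record of the configuration `η`:
for every `z ≤ x`, the number of balls in `[z,x]` is strictly smaller than the
number of empty boxes in `[z,x]`. -/
def isRecord (η : Cfg) (x : ℤ) : Prop :=
  ∀ z ≤ x, (∑ y ∈ Finset.Icc z x, valZ (η y)) < ∑ y ∈ Finset.Icc z x, (1 - valZ (η y))

open Classical in
/-- The box-ball (Takahashi–Satsuma) operator `T`. -/
noncomputable def bbsT (η : Cfg) : Cfg := fun x => if isRecord η x then false else !(η x)

/-- `η` has asymptotic density `lam` of balls on both half lines. -/
def inXlam (lam : ℝ) (η : Cfg) : Prop :=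
  Tendsto (fun y : ℕ => (∑ x ∈ Finset.Icc (-(y : ℤ)) 0, valR (η x)) / (y : ℝ))
    atTop (nhds lam) ∧
  Tendsto (fun y : ℕ => (∑ x ∈ Finset.Icc (0 : ℤ) (y : ℤ), valR (η x)) / (y : ℝ))
    atTop (nhds lam)

/-- `η ∈ 𝒳`: it has a well-defined density `0 < lam < 1/2`. -/
def inX (η : Cfg) : Prop := ∃ lam : ℝ, 0 < lam ∧ lam < 1 / 2 ∧ inXlam lam η

/-- `ξ` is a walk lift of the configuration `η`. -/
def IsLift (η : Cfg) (ξ : ℤ → ℤ) : Prop :=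
  ∀ x : ℤ, ξ x - ξ (x - 1) = 2 * valZ (η x) - 1

/-- Running minimum `min_{y ≤ x} ξ(y)` of a walk. -/
noncomputable def runMin (ξ : ℤ → ℤ) (x : ℤ) : ℤ := sInf (ξ '' Set.Iic x)

/-- The box-ball operator on walks: reflection at the running minimum. -/
noncomputable def liftT (ξ : ℤ → ℤ) : ℤ → ℤ := fun x => 2 * runMin ξ x - ξ x

/-- The canonical walk lift of `η` with value `0` at the origin. -/
noncomputable def xi0 (η : Cfg) : ℤ → ℤ := fun x =>
  if 0 ≤ x then ∑ y ∈ Finset.Icc 1 x, (2 * valZ (η y) - 1)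
  else -∑ y ∈ Finset.Icc (x + 1) 0, (2 * valZ (η y) - 1)

/-! Lindley's recursion `W (x + 1) = max 0 (W x + X (x + 1))` exhibits `W` as a stationary Markov
chain moving by at most one unit per step. Stationarity forces the upward and the downward flux
across each level to agree, and a chain which never skips a level can only go from `k` to `k + 1`
or back by crossing that single level. Hence two consecutive values are exchangeable, which is
detailed balance, and by the Markov property detailed balance propagates to all finite windows. -/

open ProbabilityTheory
open scoped ENNReal

section LevelCrossing

variable {Ω : Type*} {m : MeasurableSpace Ω} {P : Measure Ω} [IsFiniteMeasure P]

theorem measure_crossing_up_eq_measure_crossing_down {α : Type*} [LinearOrder α]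
    [TopologicalSpace α] [ClosedIicTopology α] [MeasurableSpace α] [OpensMeasurableSpace α]
    {U V : Ω → α} (hUV : IdentDistrib U V P P) (n : α) :
    P {ω | U ω ≤ n ∧ n < V ω} = P {ω | V ω ≤ n ∧ n < U ω} := by
  have hU : NullMeasurableSet (U ⁻¹' Set.Iic n) P :=
    hUV.aemeasurable_fst.nullMeasurable measurableSet_Iic
  have hV : NullMeasurableSet (V ⁻¹' Set.Iic n) P :=
    hUV.aemeasurable_snd.nullMeasurable measurableSet_Iic
  simpa only [Set.sdiff_eq, ← Set.preimage_compl, Set.compl_Iic] using!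
    measure_sdiff_symm hU hV (hUV.measure_mem_eq measurableSet_Iic) (measure_ne_top P _)

variable {U V : Ω → ℤ}

theorem measure_eq_succ_swap (hUV : IdentDistrib U V P P) (hstep : ∀ᵐ ω ∂P, |V ω - U ω| ≤ 1)
    (k : ℤ) : P {ω | U ω = k ∧ V ω = k + 1} = P {ω | U ω = k + 1 ∧ V ω = k} :=
  calc P {ω | U ω = k ∧ V ω = k + 1}
      = P {ω | U ω ≤ k ∧ k < V ω} := measure_congr <| eventuallyEq_set.2 <| by
        filter_upwards [hstep] with ω hω
        rw [abs_le] at hω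
        lia
    _ = P {ω | V ω ≤ k ∧ k < U ω} := measure_crossing_up_eq_measure_crossing_down hUV k
    _ = P {ω | U ω = k + 1 ∧ V ω = k} := measure_congr <| eventuallyEq_set.2 <| by
        filter_upwards [hstep] with ω hω
        rw [abs_le] at hω
        lia

theorem measure_eq_swap_of_abs_sub_le_one (hUV : IdentDistrib U V P P)
    (hstep : ∀ᵐ ω ∂P, |V ω - U ω| ≤ 1) (k l : ℤ) :
    P {ω | U ω = k ∧ V ω = l} = P {ω | U ω = l ∧ V ω = k} := by
  by_cases hkl : |l - k| ≤ 1
  · obtain rfl | rfl | rfl : l = k ∨ l = k + 1 ∨ k = l + 1 := by grind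
    · rfl
    · exact measure_eq_succ_swap hUV hstep k
    · exact (measure_eq_succ_swap hUV hstep l).symm
  · refine measure_congr (eventuallyEq_set.2 ?_)
    filter_upwards [hstep] with ω hω
    rw [abs_le] at hkl hω
    lia

end LevelCrossing

section Window

theorem mul_prod_Ico_eq_of_detailedBalance {S M : Type*} [CommMonoid M] {p : S → M}
    {q : S → S → M} (hpq : ∀ k l, p k * q k l = p l * q l k) (w : ℤ → S) {a b : ℤ} (hab : a ≤ b) :
    p (w a) * ∏ j ∈ Ico a b, q (w j) (w (j + 1)) =
      p (w b) * ∏ j ∈ Ico a b, q (w (j + 1)) (w j) := by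
  induction b, hab using Int.leInduction with
  | base => simp
  | succ b hab ih =>
    rw [← insert_Ico_right_eq_Ico_add_one hab, prod_insert right_notMem_Ico,
      prod_insert right_notMem_Ico, mul_left_comm, ih, mul_left_comm, ← mul_assoc, hpq, mul_assoc,
      mul_left_comm]

theorem prod_Ico_comp_neg_sub_one {M : Type*} [CommMonoid M] (g : ℤ → M) (n : ℤ) :
    ∏ j ∈ Ico (-n) n, g (-j - 1) = ∏ j ∈ Ico (-n) n, g j :=
  prod_nbij' (fun j => -j - 1) (fun j => -j - 1) (by grind) (by grind) (by grind) (by grind)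
    (by grind)

variable {Ω S : Type*} {m : MeasurableSpace Ω} {P : Measure Ω}
  [MeasurableSpace S] [Countable S] [MeasurableSingletonClass S]

theorem map_restrict_eq_of_measure_eq {ι : Type*} {X Y : ι → Ω → S} (hX : ∀ i, Measurable (X i))
    (hY : ∀ i, Measurable (Y i)) {I : Finset ι}
    (h : ∀ w : ι → S, P {ω | ∀ j ∈ I, X j ω = w j} = P {ω | ∀ j ∈ I, Y j ω = w j}) :
    P.map (fun ω => I.restrict (X · ω)) = P.map (fun ω => I.restrict (Y · ω)) := by
  refine Measure.ext_of_singleton fun u => ?_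
  rcases isEmpty_or_nonempty Ω with _ | ⟨⟨ω⟩⟩
  · simp [Subsingleton.elim P 0]
  obtain ⟨w, rfl⟩ : ∃ w : ι → S, I.restrict w = u :=
    ⟨Function.extend Subtype.val u (X · ω), funext (Subtype.val_injective.extend_apply u _)⟩
  rw [Measure.map_apply (by fun_prop) (measurableSet_singleton _),
    Measure.map_apply (by fun_prop) (measurableSet_singleton _)]
  simpa [Set.preimage, funext_iff] using h w

theorem map_eq_of_forall_window [IsFiniteMeasure P] {X Y : ℤ → Ω → S}
    (hX : ∀ x, Measurable (X x)) (hY : ∀ x, Measurable (Y x))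
    (h : ∀ (n : ℕ) (w : ℤ → S), P {ω | ∀ j ∈ Icc (-n : ℤ) n, X j ω = w j} =
      P {ω | ∀ j ∈ Icc (-n : ℤ) n, Y j ω = w j}) :
    P.map (fun ω x => X x ω) = P.map (fun ω x => Y x ω) := by
  refine (map_eq_iff_forall_finset_map_restrict_eq (by fun_prop) (by fun_prop)).2 fun I => ?_
  obtain ⟨n, hIn⟩ : ∃ n : ℕ, I ⊆ Icc (-n : ℤ) n := by
    refine ⟨I.sup Int.natAbs, fun i hi => ?_⟩
    have := Finset.le_sup (f := Int.natAbs) hi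
    rw [Finset.mem_Icc]
    lia
  have hwindow := congrArg (Measure.map (restrict₂ (π := fun _ => S) hIn))
    (map_restrict_eq_of_measure_eq hX hY (h n))
  rwa [Measure.map_map (by fun_prop) (by fun_prop),
    Measure.map_map (by fun_prop) (by fun_prop)] at hwindow

end Window

/-- `W` is a time-homogeneous Markov chain on `S`, indexed by `ℤ`, with respect to the filtration
`𝓕`: given an event of the past on which `W x = k`, it moves to `l` with probability `q k l`. -/
structure IsMarkovChain {Ω S : Type*} {m : MeasurableSpace Ω} [MeasurableSpace S]
    (W : ℤ → Ω → S) (𝓕 : Filtration ℤ m) (q : S → S → ℝ≥0∞) (P : Measure Ω) : Prop where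
  adapted : Adapted 𝓕 W
  measure_inter_transition : ∀ ⦃x : ℤ⦄ ⦃B : Set Ω⦄ ⦃k : S⦄ (l : S), MeasurableSet[𝓕 x] B →
    (∀ ω ∈ B, W x ω = k) → P (B ∩ {ω | W (x + 1) ω = l}) = P B * q k l

section MarkovChain

variable {Ω S : Type*} {m : MeasurableSpace Ω} {P : Measure Ω} [MeasurableSpace S]
  {W : ℤ → Ω → S} {𝓕 : Filtration ℤ m} {q : S → S → ℝ≥0∞}

theorem IsMarkovChain.measurable (hW : IsMarkovChain W 𝓕 q P) (x : ℤ) : Measurable (W x) :=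
  (hW.adapted x).mono (𝓕.le x) le_rfl

variable [MeasurableSingletonClass S]

theorem isMarkovChain_of_recursion {Z : Type*} [MeasurableSpace Z] {f : S → Z → S}
    (hf : ∀ k, Measurable (f k)) {ζ : ℤ → Ω → Z} (hW : Adapted 𝓕 W)
    (hrec : ∀ x, ∀ᵐ ω ∂P, W (x + 1) ω = f (W x ω) (ζ (x + 1) ω))
    (hindep : ∀ x, Indep (MeasurableSpace.comap (ζ (x + 1)) inferInstance) (𝓕 x) P)
    (hident : ∀ x, IdentDistrib (ζ x) (ζ 0) P P) :
    IsMarkovChain W 𝓕 (fun k l => P {ω | f k (ζ 0 ω) = l}) P where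
  adapted := hW
  measure_inter_transition x B k l hB hBk := by
    have hfl : MeasurableSet (f k ⁻¹' {l}) := hf k (measurableSet_singleton l)
    calc P (B ∩ {ω | W (x + 1) ω = l})
        = P (ζ (x + 1) ⁻¹' (f k ⁻¹' {l}) ∩ B) := measure_congr <| eventuallyEq_set.2 <| by
          filter_upwards [hrec x] with ω hω
          simp only [Set.mem_inter_iff, Set.mem_preimage, Set.mem_singleton_iff,
            Set.mem_ofPred_eq, hω]
          grind
      _ = P (ζ (x + 1) ⁻¹' (f k ⁻¹' {l})) * P B :=
          (Indep_iff _ _ P).1 (hindep x) _ _ ⟨_, hfl, rfl⟩ hB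
      _ = P B * P {ω | f k (ζ 0 ω) = l} := by
          rw [(hident (x + 1)).measure_mem_eq hfl, mul_comm]
          rfl

namespace IsMarkovChain

theorem measurableSet_path (hW : IsMarkovChain W 𝓕 q P) (w : ℤ → S) (a b : ℤ) :
    MeasurableSet[𝓕 b] {ω | ∀ j ∈ Icc a b, W j ω = w j} := by
  simp only [Set.ofPred_forall]
  exact Finset.measurableSet_biInter _ fun j hj =>
    𝓕.mono (Finset.mem_Icc.1 hj).2 _ (hW.adapted j (measurableSet_singleton (w j)))

theorem measure_path (hW : IsMarkovChain W 𝓕 q P) (w : ℤ → S) {a b : ℤ} (hab : a ≤ b) :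
    P {ω | ∀ j ∈ Icc a b, W j ω = w j} =
      P {ω | W a ω = w a} * ∏ j ∈ Ico a b, q (w j) (w (j + 1)) := by
  induction b, hab using Int.leInduction with
  | base => simp
  | succ b hab ih =>
    have hsplit : {ω | ∀ j ∈ Icc a (b + 1), W j ω = w j} =
        {ω | ∀ j ∈ Icc a b, W j ω = w j} ∩ {ω | W (b + 1) ω = w (b + 1)} := by
      rw [← insert_Icc_right_eq_Icc_add_one (by lia)]
      ext ω
      simp [and_comm]
    rw [hsplit, hW.measure_inter_transition _ (hW.measurableSet_path w a b)
        fun ω hω => hω b (right_mem_Icc.2 hab),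
      ih, ← insert_Ico_right_eq_Ico_add_one hab, prod_insert right_notMem_Ico, mul_assoc,
      mul_comm (q _ _)]

theorem detailedBalance (hW : IsMarkovChain W 𝓕 q P) {x : ℤ}
    (hswap : ∀ k l, P {ω | W x ω = k ∧ W (x + 1) ω = l} = P {ω | W x ω = l ∧ W (x + 1) ω = k})
    (k l : S) : P {ω | W x ω = k} * q k l = P {ω | W x ω = l} * q l k := by
  have hjoint (k l : S) : P {ω | W x ω = k} * q k l = P {ω | W x ω = k ∧ W (x + 1) ω = l} :=
    (hW.measure_inter_transition l (hW.adapted x (measurableSet_singleton k)) fun _ h => h).symm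
  rw [hjoint, hjoint, hswap]

theorem map_eq_map_neg [Countable S] [IsFiniteMeasure P] (hW : IsMarkovChain W 𝓕 q P)
    (hstat : ∀ x, IdentDistrib (W x) (W 0) P P)
    (hswap : ∀ k l, P {ω | W 0 ω = k ∧ W 1 ω = l} = P {ω | W 0 ω = l ∧ W 1 ω = k}) :
    P.map (fun ω x => W x ω) = P.map (fun ω x => W (-x) ω) := by
  refine map_eq_of_forall_window hW.measurable (fun x => hW.measurable (-x)) fun n w => ?_
  have hn : -(n : ℤ) ≤ n := by lia
  have hmarginal (x : ℤ) (k : S) : P {ω | W x ω = k} = P {ω | W 0 ω = k} :=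
    (hstat x).measure_mem_eq (measurableSet_singleton k)
  calc P {ω | ∀ j ∈ Icc (-n : ℤ) n, W j ω = w j}
      = P {ω | W 0 ω = w (-n)} * ∏ j ∈ Ico (-n : ℤ) n, q (w j) (w (j + 1)) := by
        rw [hW.measure_path w hn, hmarginal]
    _ = P {ω | W 0 ω = w n} * ∏ j ∈ Ico (-n : ℤ) n, q (w (j + 1)) (w j) :=
        mul_prod_Ico_eq_of_detailedBalance (p := fun k => P {ω | W 0 ω = k})
          (hW.detailedBalance hswap) w hn
    _ = P {ω | W 0 ω = w n} * ∏ j ∈ Ico (-n : ℤ) n, q (w (-j)) (w (-(j + 1))) := by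
        rw [← prod_Ico_comp_neg_sub_one]
        simp only [sub_add_cancel, neg_add']
    _ = P {ω | ∀ j ∈ Icc (-n : ℤ) n, W j ω = w (-j)} := by
        rw [hW.measure_path (fun j => w (-j)) hn, hmarginal (-n), neg_neg]
    _ = P {ω | ∀ j ∈ Icc (-n : ℤ) n, W (-j) ω = w j} := by
        congr 1
        ext ω
        exact ⟨fun h j hj => by simpa using h (-j) (by grind),
          fun h j hj => by simpa using h (-j) (by grind)⟩

end IsMarkovChain

end MarkovChain

section Lindley

/-- The sum of the `n` increments of a walk up to and including time `x`. -/
def backwardSum (X : ℤ → ℤ) (x : ℤ) (n : ℕ) : ℤ := ∑ i ∈ range n, X (x - i)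

/-- The height at time `x` above its past minimum of a walk with increments `X`. Unlike the walk,
it is a function of the increments up to time `x` alone. It takes the junk value `0` when the
backward sums are unbounded. -/
noncomputable def reflectedWalk (X : ℤ → ℤ) (x : ℤ) : ℤ := ⨆ n, backwardSum X x n

theorem backwardSum_add_one_succ (X : ℤ → ℤ) (x : ℤ) (n : ℕ) :
    backwardSum X (x + 1) (n + 1) = backwardSum X x n + X (x + 1) := by
  simp [backwardSum, sum_range_succ']

theorem backwardSum_eq_sub {X ξ : ℤ → ℤ} (hξ : ∀ x, ξ x - ξ (x - 1) = X x) (x : ℤ) (n : ℕ) :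
    backwardSum X x n = ξ x - ξ (x - n) := by
  simpa [backwardSum, ← hξ, sub_sub] using sum_range_sub' (fun i : ℕ => ξ (x - i)) n

theorem reflectedWalk_add_one {X : ℤ → ℤ} {x : ℤ} (hX : BddAbove (Set.range (backwardSum X x))) :
    reflectedWalk X (x + 1) = max 0 (reflectedWalk X x + X (x + 1)) := by
  have hlub : IsLUB (Set.range (backwardSum X x)) (reflectedWalk X x) := isLUB_ciSup hX
  refine IsLUB.ciSup_eq ⟨?_, fun c hc => ?_⟩
  · rintro _ ⟨_ | n, rfl⟩
    · simp [backwardSum]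
    · rw [backwardSum_add_one_succ]
      exact le_max_of_le_right (by gcongr; exact hlub.1 ⟨n, rfl⟩)
  · refine max_le (hc ⟨0, by simp [backwardSum]⟩) (le_sub_iff_add_le.1 (hlub.2 ?_))
    rintro _ ⟨n, rfl⟩
    rw [le_sub_iff_add_le, ← backwardSum_add_one_succ]
    exact hc ⟨n + 1, rfl⟩

theorem reflectedWalk_nonneg {X : ℤ → ℤ} {x : ℤ} (hX : BddAbove (Set.range (backwardSum X x))) :
    0 ≤ reflectedWalk X x :=
  le_ciSup hX 0

theorem sub_runMin_eq_reflectedWalk {X ξ : ℤ → ℤ} (hξ : ∀ x, ξ x - ξ (x - 1) = X x) {x : ℤ}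
    (hX : BddAbove (Set.range (backwardSum X x))) : ξ x - runMin ξ x = reflectedWalk X x := by
  suffices hleast : IsLeast (ξ '' Set.Iic x) (ξ x - reflectedWalk X x) by
    rw [runMin, hleast.csInf_eq, sub_sub_cancel]
  refine ⟨?_, ?_⟩
  · obtain ⟨n, hn⟩ : reflectedWalk X x ∈ Set.range (backwardSum X x) :=
      Int.csSup_mem (Set.range_nonempty _) hX
    exact ⟨x - n, by simp, by rw [← hn, backwardSum_eq_sub hξ, sub_sub_cancel]⟩
  · rintro _ ⟨y, hy, rfl⟩
    obtain ⟨n, rfl⟩ : ∃ n : ℕ, y = x - n := ⟨(x - y).toNat, by grind⟩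
    rw [sub_le_comm, ← backwardSum_eq_sub hξ]
    exact le_ciSup hX n

end Lindley

section IndependentIncrements

variable {Ω : Type*} {m : MeasurableSpace Ω} {P : Measure Ω}

theorem ae_tendsto_sum_range_atBot {X : ℕ → Ω → ℝ} (hindep : Pairwise fun i j => X i ⟂ᵢ[P] X j)
    (hident : ∀ i, IdentDistrib (X i) (X 0) P P) (hmean : ∫ ω, X 0 ω ∂P < 0) :
    ∀ᵐ ω ∂P, Tendsto (fun n : ℕ => ∑ i ∈ range n, X i ω) atTop atBot := by
  filter_upwards [strong_law_ae_real X (.of_integral_ne_zero hmean.ne) hindep hident] with ω hω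
  refine (hω.neg_mul_atTop hmean tendsto_natCast_atTop_atTop).congr' ?_
  filter_upwards [eventually_ne_atTop 0] with n hn
  field_simp

variable {X : ℤ → Ω → ℤ}

theorem ae_bddAbove_backwardSum (hindep : iIndepFun X P)
    (hident : ∀ x, IdentDistrib (X x) (X 0) P P) (hmean : ∫ ω, (X 0 ω : ℝ) ∂P < 0) :
    ∀ᵐ ω ∂P, ∀ x, BddAbove (Set.range (backwardSum (X · ω) x)) := by
  refine ae_all_iff.2 fun x => ?_
  have hcast : Measurable (Int.cast : ℤ → ℝ) := .of_discrete
  have hident' (y z : ℤ) : IdentDistrib (X y) (X z) P P := (hident y).trans (hident z).symm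
  have hmean' : ∫ ω, (X (x - (0 : ℕ)) ω : ℝ) ∂P < 0 :=
    (((hident _).comp hcast).integral_eq).trans_lt hmean
  have hlimit := ae_tendsto_sum_range_atBot (X := fun i ω => (X (x - i) ω : ℝ))
    (fun i j hij => (hindep.indepFun (by simpa using hij)).comp hcast hcast)
    (fun i => (hident' _ _).comp hcast) hmean'
  filter_upwards [hlimit] with ω hω
  refine bddAbove_range_of_tendsto_atTop_atBot ((tendsto_intCast_atBot_iff (R := ℝ)).1 ?_)
  simpa [backwardSum] using hω

theorem measurable_iSup_sum_range {Y : ℕ → Ω → ℤ} (hY : ∀ i, Measurable (Y i)) :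
    Measurable fun ω => ⨆ n, ∑ i ∈ range n, Y i ω :=
  .iSup fun _ => Finset.measurable_sum _ fun i _ => hY i

theorem adapted_reflectedWalk {𝓕 : Filtration ℤ m} (hX : Adapted 𝓕 X) :
    Adapted 𝓕 fun x ω => reflectedWalk (X · ω) x := fun x =>
  measurable_iSup_sum_range fun i => (hX (x - i)).mono (𝓕.mono (by lia)) le_rfl

theorem identDistrib_reflectedWalk (hindep : iIndepFun X P)
    (hident : ∀ x, IdentDistrib (X x) (X 0) P P) (x y : ℤ) :
    IdentDistrib (fun ω => reflectedWalk (X · ω) x) (fun ω => reflectedWalk (X · ω) y) P P := by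
  have hindep' (z : ℤ) : iIndepFun (fun (i : ℕ) => X (z - i)) P :=
    hindep.precomp fun i j h => by simpa using h
  have hpast : IdentDistrib (fun ω (i : ℕ) => X (x - i) ω) (fun ω (i : ℕ) => X (y - i) ω) P P :=
    .pi (fun i => (hident _).trans (hident _).symm) (hindep' x) (hindep' y)
  exact hpast.comp (measurable_iSup_sum_range measurable_pi_apply)

theorem exists_isMarkovChain_reflectedWalk (hmeas : ∀ x, Measurable (X x)) (hindep : iIndepFun X P)
    (hident : ∀ x, IdentDistrib (X x) (X 0) P P) (hmean : ∫ ω, (X 0 ω : ℝ) ∂P < 0) :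
    ∃ 𝓕 q, IsMarkovChain (fun x ω => reflectedWalk (X · ω) x) 𝓕 q P := by
  have hmeas' (x : ℤ) : StronglyMeasurable (X x) := (hmeas x).stronglyMeasurable
  have hadapted : Adapted (Filtration.natural X hmeas') X := fun x =>
    (comap_measurable (X x)).mono (le_iSup₂_of_le x le_rfl le_rfl) le_rfl
  refine ⟨_, _, isMarkovChain_of_recursion (f := fun k z => max 0 (k + z)) (by fun_prop)
    (adapted_reflectedWalk hadapted) (fun x => ?_)
    (fun x => hindep.indep_comap_natural_of_lt hmeas' (lt_add_one x)) hident⟩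
  filter_upwards [ae_bddAbove_backwardSum hindep hident hmean] with ω hω
  exact reflectedWalk_add_one (hω x)

theorem ae_abs_reflectedWalk_add_one_sub_le_one (hindep : iIndepFun X P)
    (hident : ∀ x, IdentDistrib (X x) (X 0) P P) (hskip : ∀ᵐ ω ∂P, |X 0 ω| ≤ 1)
    (hmean : ∫ ω, (X 0 ω : ℝ) ∂P < 0) (x : ℤ) :
    ∀ᵐ ω ∂P, |reflectedWalk (X · ω) (x + 1) - reflectedWalk (X · ω) x| ≤ 1 := by
  have hskip' : ∀ᵐ ω ∂P, |X (x + 1) ω| ≤ 1 :=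
    (hident (x + 1)).symm.ae_snd (p := fun z => |z| ≤ 1) .of_discrete hskip
  filter_upwards [hskip', ae_bddAbove_backwardSum hindep hident hmean] with ω hstep hω
  have hnonneg := reflectedWalk_nonneg (hω x)
  rw [reflectedWalk_add_one (hω x)]
  grind

end IndependentIncrements

section Bernoulli

variable {Ω : Type*} {m : MeasurableSpace Ω} {P : Measure Ω}

theorem isLift_xi0 (η : Cfg) : IsLift η (xi0 η) := by
  intro x
  simp only [xi0]
  rcases lt_trichotomy x 0 with hx | rfl | hx
  · rw [if_neg (by lia), if_neg (by lia), sub_add_cancel,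
      ← insert_Icc_add_one_left_eq_Icc hx.le, sum_insert (by simp)]
    ring
  · simp
  · rw [if_pos hx.le, if_pos (by lia), ← insert_Icc_sub_one_right_eq_Icc (by lia),
      sum_insert (by simp)]
    ring

theorem identDistrib_bool [IsFiniteMeasure P] {f g : Ω → Bool} (hf : Measurable f)
    (hg : Measurable g) (h : P (f ⁻¹' {true}) = P (g ⁻¹' {true})) :
    IdentDistrib f g P P := by
  refine ⟨hf.aemeasurable, hg.aemeasurable, Measure.ext_of_singleton fun b => ?_⟩
  rw [Measure.map_apply hf (measurableSet_singleton b),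
    Measure.map_apply hg (measurableSet_singleton b)]
  cases b with
  | true => exact h
  | false =>
    have hcompl (f : Ω → Bool) : f ⁻¹' {false} = (f ⁻¹' {true})ᶜ := by
      ext ω
      simp
    rw [hcompl, hcompl, measure_compl (hf (measurableSet_singleton true)) (measure_ne_top P _),
      measure_compl (hg (measurableSet_singleton true)) (measure_ne_top P _), h]

theorem integral_two_mul_valZ_sub_one [IsProbabilityMeasure P] {f : Ω → Bool} (hf : Measurable f)
    {lam : ℝ} (h0 : 0 ≤ lam) (h : P {ω | f ω = true} = ENNReal.ofReal lam) :
    ∫ ω, ((2 * valZ (f ω) - 1 : ℤ) : ℝ) ∂P = 2 * lam - 1 := by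
  have hval : Measurable fun ω => (valZ (f ω) : ℝ) :=
    Measurable.comp (g := fun b => (valZ b : ℝ)) .of_discrete hf
  have hvalues (ω : Ω) : (valZ (f ω) : ℝ) = 0 ∨ (valZ (f ω) : ℝ) = 1 := by
    cases f ω <;> simp [valZ]
  have hint : Integrable (fun ω => (valZ (f ω) : ℝ)) P :=
    .of_bound hval.aestronglyMeasurable 1 (ae_of_all _ fun ω => by
      rcases hvalues ω with h | h <;> simp [h])
  have hmean : ∫ ω, (valZ (f ω) : ℝ) ∂P = lam := by
    simpa [valZ, measureReal_def, h, h0] using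
      integral_of_ae_eq_zero_or_one hval.aemeasurable (ae_of_all P hvalues)
  push_cast
  rw [integral_sub (hint.const_mul 2) (integrable_const 1), integral_const_mul, hmean]
  simp

end Bernoulli

theorem reflected_walk_reversible_general {Ω : Type*} {m : MeasurableSpace Ω} {P : Measure Ω}
    {X : ℤ → Ω → ℤ} {ξ : Ω → ℤ → ℤ} (hξ : ∀ ω x, ξ ω x - ξ ω (x - 1) = X x ω)
    (hmeas : ∀ x, Measurable (X x)) (hindep : iIndepFun X P)
    (hident : ∀ x, IdentDistrib (X x) (X 0) P P) (hskip : ∀ᵐ ω ∂P, |X 0 ω| ≤ 1)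
    (hmean : ∫ ω, (X 0 ω : ℝ) ∂P < 0) :
    P.map (fun ω x => ξ ω x - runMin (ξ ω) x) =
      P.map (fun ω x => ξ ω (-x) - runMin (ξ ω) (-x)) := by
  have : IsProbabilityMeasure P := hindep.isProbabilityMeasure
  have hW : ∀ᵐ ω ∂P, ∀ x, ξ ω x - runMin (ξ ω) x = reflectedWalk (X · ω) x := by
    filter_upwards [ae_bddAbove_backwardSum hindep hident hmean] with ω hω x
    exact sub_runMin_eq_reflectedWalk (hξ ω) (hω x)
  obtain ⟨𝓕, q, hMarkov⟩ := exists_isMarkovChain_reflectedWalk hmeas hindep hident hmean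
  have hstat := identDistrib_reflectedWalk hindep hident
  have hswap := measure_eq_swap_of_abs_sub_le_one (hstat 0 1)
    (ae_abs_reflectedWalk_add_one_sub_le_one hindep hident hskip hmean 0)
  calc P.map (fun ω x => ξ ω x - runMin (ξ ω) x)
      = P.map (fun ω x => reflectedWalk (X · ω) x) :=
        Measure.map_congr (hW.mono fun ω hω => funext hω)
    _ = P.map (fun ω x => reflectedWalk (X · ω) (-x)) :=
        hMarkov.map_eq_map_neg (fun x => hstat x 0) hswap
    _ = P.map (fun ω x => ξ ω (-x) - runMin (ξ ω) (-x)) :=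
        Measure.map_congr (hW.mono fun ω hω => funext fun x => (hω (-x)).symm)

open MeasureTheory ProbabilityTheory in
/-- Let `(η(x))_{x∈ℤ}` be i.i.d. Bernoulli(`lam`) with
`0 < lam < 1/2`, let `ξ` be the walk lift of `η` with `ξ(0) = 0`, and let
`W(x) = ξ(x) − min_{y≤x} ξ(y)`.  Then `W` is reversible: `(W(x))_{x∈ℤ}` has the
same law as `(W(−x))_{x∈ℤ}`. -/
theorem reflected_walk_reversible {Ω : Type*} [MeasurableSpace Ω]
    (P : Measure Ω) [IsProbabilityMeasure P] (lam : ℝ) (h0 : 0 < lam)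
    (h1 : lam < 1 / 2) (η : Ω → Cfg) (hmeas : ∀ x : ℤ, Measurable fun ω => η ω x)
    (hindep : iIndepFun (fun x ω => η ω x) P)
    (hber : ∀ x : ℤ, P {ω | η ω x = true} = ENNReal.ofReal lam) :
    P.map (fun ω => fun x : ℤ => xi0 (η ω) x - runMin (xi0 (η ω)) x) =
      P.map (fun ω => fun x : ℤ => xi0 (η ω) (-x) - runMin (xi0 (η ω)) (-x)) := by
  have hval : Measurable fun b : Bool => 2 * valZ b - 1 := .of_discrete
  refine reflected_walk_reversible_general (fun ω => isLift_xi0 (η ω))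
    (fun x => hval.comp (hmeas x)) (hindep.comp _ fun _ => hval)
    (fun x => (identDistrib_bool (hmeas x) (hmeas 0) ((hber x).trans (hber 0).symm)).comp hval)
    (ae_of_all P fun ω => by cases η ω 0 <;> simp [valZ]) ?_
  rw [integral_two_mul_valZ_sub_one (hmeas 0) h0.le (hber 0)]
  linarith
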